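/- Let 0 < q < 1 be real, let x be a real number, and let d be an odd positive integer. For every integer n ≥ 0, the Carlitz q-Euler polynomial values satisfy the distribution relation ℰ_{n,q}(x) = ((1+q)/(1+q^d)) · [d]_q^n · Σ_{a=0}^{d−1} (−q)^a ℰ_{n,q^d}((a+x)/d), where ℰ_{n,q^d} denotes the Carlitz q-Euler polynomial value formed with base q^d in place of q. -/

import Mathlib

/-- The `q`-analogue `[x]_q = (1 - q^x)/(1 - q)` (real exponent, via `rpow`). -/
noncomputable def qnum (q x : ℝ) : ℝ := (1 - q ^ x) / (1 - q)

/-- Carlitz `q`-Euler polynomial value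
`ℰ_{n,q}(x) = (1+q) ∑_{m=0}^∞ (-q)^m [m+x]_q^n`. -/
noncomputable def qEuler (q : ℝ) (n : ℕ) (x : ℝ) : ℝ :=
  (1 + q) * ∑' m : ℕ, (-q) ^ m * (qnum q ((m : ℝ) + x)) ^ n

/-- Signed Stirling numbers of the first kind, defined as the coefficients of the
falling factorial: `x(x-1)⋯(x-n+1) = ∑_{k=0}^n S₁(n,k) x^k`. -/
noncomputable def S1 (n k : ℕ) : ℤ := (descPochhammer ℤ n).coeff k

/-- Stirling numbers of the second kind, so that
`x^n = ∑_{k=0}^n S₂(n,k) x(x-1)⋯(x-k+1)`. -/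
def S2 : ℕ → ℕ → ℕ
  | 0, 0 => 1
  | 0, _ + 1 => 0
  | _ + 1, 0 => 0
  | n + 1, k + 1 => S2 n k + (k + 1) * S2 n (k + 1)

/-- Carlitz type `q`-Changhee polynomial value
`Ch_{n,q}(x) = ∑_{k=0}^n S₁(n,k) ℰ_{k,q}(x)`. -/
noncomputable def qChanghee (q : ℝ) (n : ℕ) (x : ℝ) : ℝ :=
  ∑ k ∈ Finset.range (n + 1), (S1 n k : ℝ) * qEuler q k x

/-!
Splitting `∑ r ^ m [m + x]_q ^ n` over the residues `a` of `m` modulo `d` and rescaling by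
`[d y]_q = [d]_q [y]_{q ^ d}` turns each residue class into a series of the same shape, with weight
`r ^ d`, base `q ^ d` and argument `(a + x) / d`. The Euler case is `r = -q`: for odd `d` the weight
`(-q) ^ d = -q ^ d` is again minus the base, so the inner series are again `q`-Euler values.
-/

open Filter Finset Topology

section ResidueClasses

lemma sum_zmod_val_eq_sum_range {M : Type*} [AddCommMonoid M] (N : ℕ) [NeZero N] (f : ℕ → M) :
    ∑ j : ZMod N, f j.val = ∑ a ∈ range N, f a := by
  cases N with
  | zero => exact (NeZero.ne 0 rfl).elim
  | succ N => exact (sum_range f).symm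

lemma tsum_eq_sum_range_tsum_add_mul {R : Type*} [AddCommGroup R] [UniformSpace R]
    [IsUniformAddGroup R] [CompleteSpace R] [T0Space R] {f : ℕ → R} (hf : Summable f)
    (N : ℕ) [NeZero N] :
    ∑' m, f m = ∑ a ∈ range N, ∑' k, f (a + N * k) :=
  (Nat.sumByResidueClasses hf N).trans
    (sum_zmod_val_eq_sum_range N fun a ↦ ∑' k, f (a + N * k))

end ResidueClasses

section QNumber

variable {q : ℝ}

lemma qnum_mul {a : ℝ} (hq : 0 ≤ q) (ha : q ^ a ≠ 1) (y : ℝ) :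
    qnum q (a * y) = qnum q a * qnum (q ^ a) y := by
  have ha' : 1 - q ^ a ≠ 0 := sub_ne_zero.mpr ha.symm
  rw [qnum, qnum, qnum, Real.rpow_mul hq, mul_comm, div_mul_div_cancel₀ ha']

lemma qnum_natCast_add {d : ℕ} (hq : 0 ≤ q) (hqd : q ^ d ≠ 1) (a k : ℕ) (x : ℝ) :
    qnum q ((a + d * k : ℕ) + x) = qnum q d * qnum (q ^ d) (k + (a + x) / d) := by
  have hd : (d : ℝ) ≠ 0 := Nat.cast_ne_zero.mpr fun h ↦ hqd (by rw [h, pow_zero])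
  have rescale : ((a + d * k : ℕ) : ℝ) + x = d * (k + (a + x) / d) := by
    push_cast
    field_simp
    ring
  rw [rescale, qnum_mul hq (by rwa [Real.rpow_natCast]), Real.rpow_natCast]

lemma tendsto_qnum_atTop (hq₀ : -1 < q) (hq₁ : q < 1) :
    Tendsto (qnum q) atTop (𝓝 (1 - q)⁻¹) := by
  simpa only [sub_zero, one_div] using!
    ((tendsto_rpow_atTop_of_base_lt_one q hq₀ hq₁).const_sub 1).div_const (1 - q)

end QNumber

section LerchSeries

/-- The `q`-analogue `∑ₘ r ^ m [m + x]_q ^ n` of the Lerch series `Φ(r, -n, x)`. The weight `r` is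
kept independent of the base `q`, so that one distribution relation holds for every `d`; the
`q`-Euler values are `1 + q` times the case `r = -q`. -/
noncomputable def qLerch (r q : ℝ) (n : ℕ) (x : ℝ) : ℝ :=
  ∑' m : ℕ, r ^ m * qnum q (m + x) ^ n

lemma qEuler_eq_mul_qLerch (q : ℝ) (n : ℕ) (x : ℝ) :
    qEuler q n x = (1 + q) * qLerch (-q) q n x :=
  rfl

variable {r q : ℝ}

lemma summable_pow_mul_qnum_pow (hr : |r| < 1) (hq₀ : -1 < q) (hq₁ : q < 1) (n : ℕ) (x : ℝ) :
    Summable fun m : ℕ ↦ r ^ m * qnum q (m + x) ^ n := by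
  have hlim : Tendsto (fun m : ℕ ↦ qnum q (m + x) ^ n) cofinite (𝓝 ((1 - q)⁻¹ ^ n)) := by
    rw [Nat.cofinite_eq_atTop]
    exact ((tendsto_qnum_atTop hq₀ hq₁).comp
      (tendsto_atTop_add_const_right _ x tendsto_natCast_atTop_atTop)).pow n
  exact (summable_norm_geometric_of_norm_lt_one hr).mul_tendsto_const hlim

lemma tsum_residueClass_eq_mul_qLerch {d : ℕ} (hq : 0 ≤ q) (hqd : q ^ d ≠ 1)
    (n a : ℕ) (x : ℝ) :
    ∑' k : ℕ, r ^ (a + d * k) * qnum q ((a + d * k : ℕ) + x) ^ n =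
      qnum q d ^ n * (r ^ a * qLerch (r ^ d) (q ^ d) n ((a + x) / d)) := by
  rw [qLerch, ← tsum_mul_left, ← tsum_mul_left]
  refine tsum_congr fun k ↦ ?_
  rw [qnum_natCast_add hq hqd, mul_pow, pow_add, pow_mul]
  ring

theorem qLerch_distribution_relation {d : ℕ} (hd : d ≠ 0) (hr : |r| < 1) (hq₀ : 0 ≤ q)
    (hq₁ : q < 1) (n : ℕ) (x : ℝ) :
    qLerch r q n x =
      qnum q d ^ n * ∑ a ∈ range d, r ^ a * qLerch (r ^ d) (q ^ d) n ((a + x) / d) := by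
  have : NeZero d := ⟨hd⟩
  have hqd : q ^ d ≠ 1 := (pow_lt_one₀ hq₀ hq₁ hd).ne
  have hsum := summable_pow_mul_qnum_pow hr (by linarith) hq₁ n x
  rw [qLerch, tsum_eq_sum_range_tsum_add_mul hsum d, mul_sum]
  exact sum_congr rfl fun a _ ↦ tsum_residueClass_eq_mul_qLerch hq₀ hqd n a x

end LerchSeries

theorem qEuler_distribution_relation (q x : ℝ) (hq0 : 0 < q) (hq1 : q < 1)
    (d : ℕ) (hd0 : 0 < d) (hd : Odd d) (n : ℕ) :
    qEuler q n x = ((1 + q) / (1 + q ^ d)) * (qnum q (d : ℝ)) ^ n *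
      ∑ a ∈ Finset.range d, (-q) ^ a * qEuler (q ^ d) n (((a : ℝ) + x) / (d : ℝ)) := by
  have hr : |-q| < 1 := by rwa [abs_neg, abs_of_pos hq0]
  have hqd : 1 + q ^ d ≠ 0 := by positivity
  have hinner (a : ℕ) : qLerch ((-q) ^ d) (q ^ d) n ((a + x) / d) =
      qEuler (q ^ d) n ((a + x) / d) / (1 + q ^ d) := by
    rw [hd.neg_pow, qEuler_eq_mul_qLerch, mul_div_cancel_left₀ _ hqd]
  rw [qEuler_eq_mul_qLerch, qLerch_distribution_relation hd0.ne' hr hq0.le hq1]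
  simp only [hinner, ← mul_div_assoc, ← sum_div]
  ring
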